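/- arXiv:2602.11486 — 2 statements merged into one kernel-verified Lean document; each statement's English description precedes it below -/
import Mathlib

section
/- There exist constants c > 0 and T₀ ∈ ℕ, depending only on δ and Δ, such that: for every Alice value density v_A and every deterministic Alice strategy in the repeated measurable-cut game, there exists a Bob value density v_B (measurable, bounded above and below by positive constants depending only on δ and Δ, with total integral 1) such that for every horizon T ≥ T₀, Alice's Stackelberg regret over T rounds against the myopic Bob with value density v_B is at least c·T/(log T)². -/
open MeasureTheory Set

noncomputable section

attribute [local instance] Classical.propDecidable

/-- A value density: measurable, bounded in `[δ, Δ]` on `[0,1]`, integrating to 1 on `[0,1]`. -/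
def IsValueDensity (δ Δ : ℝ) (v : ℝ → ℝ) : Prop :=
  Measurable v ∧ (∀ x ∈ Set.Icc (0:ℝ) 1, v x ∈ Set.Icc δ Δ) ∧
    (∫ x in Set.Icc (0:ℝ) 1, v x) = 1

/-- The value of a piece `S` under density `v`. -/
def pieceVal (v : ℝ → ℝ) (S : Set ℝ) : ℝ := ∫ x in S, v x

/-- Alice's deterministic strategy in the measurable-cut game: the horizon and the history
of Bob's previous choices determine her next partition, given by the piece `S`
(the other piece being `[0,1] \ S`). -/
abbrev MAliceStrategy := ℕ → List Bool → Set ℝ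

/-- The two pieces of the measurable partition given by `S`. -/
def mPiece (S : Set ℝ) (b : Bool) : Set ℝ :=
  if b then S ∩ Set.Icc 0 1 else Set.Icc 0 1 \ S

/-- Myopic Bob's choice: the piece of larger `V_B`-value, ties broken towards the piece of
smaller `V_A`-value. -/
def mMyopic (vA vB : ℝ → ℝ) (S : Set ℝ) : Bool :=
  if pieceVal vB (mPiece S false) < pieceVal vB (mPiece S true) then true
  else if pieceVal vB (mPiece S true) < pieceVal vB (mPiece S false) then false
  else if pieceVal vA (mPiece S true) ≤ pieceVal vA (mPiece S false) then true
  else false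

/-- The list of myopic Bob's choices in the first `t` rounds. -/
def mChoices (vA vB : ℝ → ℝ) (SA : MAliceStrategy) (T : ℕ) : ℕ → List Bool
  | 0 => []
  | t + 1 =>
      let h := mChoices vA vB SA T t
      h ++ [mMyopic vA vB (SA T h)]

/-- Alice's Stackelberg value in the measurable-cut game: the supremum of `V_A(S)` over
measurable `S ⊆ [0,1]` with `V_B([0,1] \ S) ≥ 1/2`. -/
def mStackelberg (vA vB : ℝ → ℝ) : ℝ :=
  sSup { u : ℝ | ∃ S : Set ℝ, MeasurableSet S ∧ S ⊆ Set.Icc 0 1 ∧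
    1 / 2 ≤ pieceVal vB (Set.Icc 0 1 \ S) ∧ u = pieceVal vA S }

/-- Alice's Stackelberg regret over horizon `T` against the myopic Bob: in each round she
receives the value of the piece Bob did not choose. -/
def mAliceRegret (vA vB : ℝ → ℝ) (SA : MAliceStrategy) (T : ℕ) : ℝ :=
  ∑ t ∈ Finset.range T,
    (mStackelberg vA vB -
      pieceVal vA (mPiece (SA T (mChoices vA vB SA T t))
        (!(mMyopic vA vB (SA T (mChoices vA vB SA T t))))))

/-- Splitting a set in a prescribed proportion, exactly on a finite family of sets. -/
lemma split_family (μ : Measure ℝ) [IsFiniteMeasure μ] (p : ℝ)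
    (hbase : ∀ M, MeasurableSet M → ∃ N, MeasurableSet N ∧ N ⊆ M ∧ μ.real N = p * μ.real M)
    (F : Set (Set ℝ)) (hF : F.Finite) :
    (∀ S ∈ F, MeasurableSet S) → ∀ M, MeasurableSet M → ∃ N, MeasurableSet N ∧ N ⊆ M ∧
      μ.real N = p * μ.real M ∧ ∀ S ∈ F, μ.real (N ∩ S) = p * μ.real (M ∩ S) := by
  induction F, hF using Set.Finite.induction_on with
  | empty =>
    intro _ M hM
    obtain ⟨N, h1, h2, h3⟩ := hbase M hM
    exact ⟨N, h1, h2, h3, by simp⟩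
  | @insert S F _ _ ih =>
    intro hmeas M hM
    have hS : MeasurableSet S := hmeas S (Set.mem_insert _ _)
    have hF' : ∀ S ∈ F, MeasurableSet S := fun R hR => hmeas R (Set.mem_insert_of_mem _ hR)
    obtain ⟨N1, m1, s1, e1, f1⟩ := ih hF' (M ∩ S) (hM.inter hS)
    obtain ⟨N2, m2, s2, e2, f2⟩ := ih hF' (M \ S) (hM.diff hS)
    have hi : ∀ X, MeasurableSet X → (N1 ∪ N2) ∩ X ∩ S = N1 ∩ X := by
      intro X _
      ext x
      have := @s1 x
      have := @s2 x
      simp only [Set.mem_inter_iff, Set.mem_union, Set.mem_diff] at *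
      tauto
    have hd : ∀ X, MeasurableSet X → ((N1 ∪ N2) ∩ X) \ S = N2 ∩ X := by
      intro X _
      ext x
      have := @s1 x
      have := @s2 x
      simp only [Set.mem_inter_iff, Set.mem_union, Set.mem_diff] at *
      tauto
    have key : ∀ X, MeasurableSet X → μ.real (N1 ∩ X) = p * μ.real (M ∩ S ∩ X) →
        μ.real (N2 ∩ X) = p * μ.real ((M \ S) ∩ X) →
        μ.real ((N1 ∪ N2) ∩ X) = p * μ.real (M ∩ X) := by
      intro X hX h1 h2
      have a1 := measureReal_inter_add_diff (μ := μ) (s := (N1 ∪ N2) ∩ X) hS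
      have a2 := measureReal_inter_add_diff (μ := μ) (s := M ∩ X) hS
      rw [hi X hX, hd X hX, h1, h2] at a1
      rw [← a1, ← a2, mul_add]
      congr 3
      · ext x; simp only [Set.mem_inter_iff]; tauto
      · ext x; simp only [Set.mem_inter_iff, Set.mem_diff]; tauto
    refine ⟨N1 ∪ N2, m1.union m2, ?_, ?_, ?_⟩
    · exact Set.union_subset (s1.trans Set.inter_subset_left) (s2.trans Set.diff_subset)
    · have := key Set.univ MeasurableSet.univ (by simpa using e1) (by simpa using e2)
      simpa using this
    · intro R hR
      rcases Set.mem_insert_iff.1 hR with rfl | hR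
      · have b1 : N1 ∩ R = N1 := Set.inter_eq_left.2 (s1.trans Set.inter_subset_right)
        have b2 : N2 ∩ R = ∅ := by
          ext x
          have := @s2 x
          simp only [Set.mem_inter_iff, Set.mem_diff, Set.mem_empty_iff_false] at *
          tauto
        have b3 : (M \ R) ∩ R = ∅ := by ext x; simp
        refine key R hS ?_ ?_
        · rw [b1, e1, Set.inter_assoc, Set.inter_self]
        · rw [b2, b3]; simp
      · exact key R (hF' R hR) (f1 R hR) (f2 R hR)

/-- The layered construction of Bob's cheap set `A`. -/
lemma layered (μ : Measure ℝ) [IsFiniteMeasure μ]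
    (hbase : ∀ p ∈ Set.Icc (0:ℝ) 1, ∀ M, MeasurableSet M →
      ∃ N, MeasurableSet N ∧ N ⊆ M ∧ μ.real N = p * μ.real M)
    (F : ℕ → Set (Set ℝ)) (hmono : Monotone F) (hfin : ∀ k, (F k).Finite)
    (hmeas : ∀ k, ∀ S ∈ F k, MeasurableSet S) (huniv : Set.univ ∈ F 0) :
    ∃ (A : Set ℝ) (M : ℕ → Set ℝ), MeasurableSet A ∧ (∀ k, MeasurableSet (M k)) ∧
      M 0 = Set.univ ∧ (∀ k, μ.real (M k) = (1/2)^k * μ.real Set.univ) ∧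
      ∀ k, ∀ S ∈ F k, μ.real (A ∩ M k ∩ S) = 2/3 * μ.real (M k ∩ S) := by
  have h1 := fun k => split_family μ (1/2) (hbase (1/2) (by norm_num)) (F k) (hfin k) (hmeas k)
  have h2 := fun k => split_family μ (2/3) (hbase (2/3) (by norm_num)) (F k) (hfin k) (hmeas k)
  choose f f1 f2 f3 f4 using h1
  choose g g1 g2 g3 g4 using h2
  let Q : ℕ → {M : Set ℝ // MeasurableSet M} := fun n =>
    Nat.rec ⟨Set.univ, MeasurableSet.univ⟩ (fun k M => ⟨f k M.1 M.2, f1 k M.1 M.2⟩) n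
  let M : ℕ → Set ℝ := fun n => (Q n).1
  have hM : ∀ k, MeasurableSet (M k) := fun k => (Q k).2
  have hsucc : ∀ k, M (k+1) = f k (M k) (hM k) := fun k => rfl
  have hsub : ∀ k, M (k+1) ⊆ M k := fun k => by rw [hsucc]; exact f2 _ _ _
  have hanti : Antitone M := antitone_nat_of_succ_le hsub
  have hD : ∀ k, MeasurableSet (M k \ M (k+1)) := fun k => (hM k).diff (hM (k+1))
  let B : ℕ → Set ℝ := fun k => g k (M k \ M (k+1)) (hD k)
  have hB : ∀ k, B k ⊆ M k \ M (k+1) := fun k => g2 _ _ _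
  have hBm : ∀ k, MeasurableSet (B k) := fun k => g1 _ _ _
  have hA : MeasurableSet (⋃ k, B k) := MeasurableSet.iUnion hBm
  have hAB : ∀ j, (⋃ k, B k) ∩ (M j \ M (j+1)) = B j := by
    intro j
    ext x
    constructor
    · rintro ⟨hx, hx1, hx2⟩
      obtain ⟨i, hi⟩ := Set.mem_iUnion.1 hx
      obtain ⟨hi1, hi2⟩ := hB i hi
      have : i = j := by
        rcases lt_trichotomy i j with h | h | h
        · exact absurd (hanti h hx1) hi2
        · exact h
        · exact absurd (hanti h hi1) hx2
      exact this ▸ hi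
    · intro hx
      exact ⟨Set.mem_iUnion.2 ⟨j, hx⟩, hB j hx⟩
  have hsize : ∀ k, μ.real (M k) = (1/2)^k * μ.real Set.univ := by
    intro k
    induction k with
    | zero => simp [M, Q]
    | succ k ih => rw [hsucc, f3, ih, pow_succ]; ring
  refine ⟨⋃ k, B k, M, hA, hM, rfl, hsize, ?_⟩
  intro k S hS
  have hSm : MeasurableSet S := hmeas k S hS
  set A := ⋃ k, B k with hAdef
  let a : ℕ → ℝ := fun j => μ.real (A ∩ M j ∩ S) - 2/3 * μ.real (M j ∩ S)
  have hstep : ∀ j, k ≤ j → a (j+1) = a j := by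
    intro j hj
    have hSj : S ∈ F j := hmono hj hS
    have b := g4 j (M j \ M (j+1)) (hD j) S hSj
    change μ.real (B j ∩ S) = _ at b
    have c1 := measureReal_inter_add_diff (μ := μ) (s := A ∩ M j ∩ S) (hM (j+1))
    have c2 := measureReal_inter_add_diff (μ := μ) (s := M j ∩ S) (hM (j+1))
    have d1 : A ∩ M j ∩ S ∩ M (j+1) = A ∩ M (j+1) ∩ S := by
      ext x; have := @hsub j x; simp only [Set.mem_inter_iff]; tauto
    have d2 : (A ∩ M j ∩ S) \ M (j+1) = B j ∩ S := by
      rw [← hAB j]; ext x; simp only [Set.mem_inter_iff, Set.mem_diff]; tauto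
    have d3 : M j ∩ S ∩ M (j+1) = M (j+1) ∩ S := by
      ext x; have := @hsub j x; simp only [Set.mem_inter_iff]; tauto
    have d4 : (M j ∩ S) \ M (j+1) = (M j \ M (j+1)) ∩ S := by
      ext x; simp only [Set.mem_inter_iff, Set.mem_diff]; tauto
    rw [d1, d2] at c1
    rw [d3, d4] at c2
    simp only [a]
    linarith
  have hconst : ∀ n, a (k+n) = a k := by
    intro n
    induction n with
    | zero => rfl
    | succ n ih => rw [← ih]; exact hstep (k+n) (by omega)
  have hbd : ∀ j, |a j| ≤ (1/2)^j * μ.real Set.univ := by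
    intro j
    have e1 : μ.real (A ∩ M j ∩ S) ≤ μ.real (M j) :=
      measureReal_mono (fun x hx => hx.1.2)
    have e2 : μ.real (M j ∩ S) ≤ μ.real (M j) := measureReal_mono (fun x hx => hx.1)
    have e3 : 0 ≤ μ.real (A ∩ M j ∩ S) := measureReal_nonneg
    have e4 : 0 ≤ μ.real (M j ∩ S) := measureReal_nonneg
    rw [← hsize, abs_le]
    simp only [a]
    constructor <;> linarith
  have hlim : Filter.Tendsto (fun n : ℕ => (1/2:ℝ)^(k+n) * μ.real Set.univ) Filter.atTop
      (nhds 0) := by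
    have t := tendsto_pow_atTop_nhds_zero_of_lt_one (r := (1/2:ℝ)) (by norm_num) (by norm_num)
    have t2 := (t.const_mul ((1/2:ℝ)^k)).mul_const (μ.real Set.univ)
    simpa [pow_add] using t2
  have h0 : |a k| ≤ 0 := by
    refine ge_of_tendsto' hlim (fun n => ?_)
    rw [← hconst n]; exact hbd _
  have := abs_nonpos_iff.1 h0
  simp only [a] at this
  linarith

lemma exists_split (f : ℝ → ℝ) (hf : Integrable f) (hout : ∀ x, x ∉ Set.Icc (0:ℝ) 1 → f x = 0)
    (p : ℝ) (hp : p ∈ Set.Icc (0:ℝ) 1) (hnn : ∀ x, 0 ≤ f x) (M : Set ℝ) (hM : MeasurableSet M) :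
    ∃ N, MeasurableSet N ∧ N ⊆ M ∧ ∫ x in N, f x = p * ∫ x in M, f x := by
  have hMi : Integrable (M.indicator f) := hf.indicator hM
  have hcont : Continuous (fun x => ∫ t in (-1:ℝ)..x, M.indicator f t) :=
    intervalIntegral.continuous_primitive (fun a b => hMi.intervalIntegrable) _
  have h0 : ∫ t in (-1:ℝ)..(-1), M.indicator f t = 0 := by simp
  have h1 : ∫ t in (-1:ℝ)..1, M.indicator f t = ∫ x in M, f x := by
    rw [intervalIntegral.integral_of_le (by norm_num), ← integral_indicator hM]
    refine setIntegral_eq_integral_of_forall_compl_eq_zero ?_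
    intro x hx
    have : x ∉ Set.Icc (0:ℝ) 1 := fun h => hx ⟨by linarith [h.1], h.2⟩
    simp [Set.indicator, hout x this]
  have hnn' : 0 ≤ ∫ x in M, f x := integral_nonneg hnn
  have hmem : p * ∫ x in M, f x ∈ Set.Icc (∫ t in (-1:ℝ)..(-1), M.indicator f t)
      (∫ t in (-1:ℝ)..1, M.indicator f t) := by
    rw [h0, h1]
    exact ⟨mul_nonneg hp.1 hnn', mul_le_of_le_one_left hnn' hp.2⟩
  obtain ⟨x, hx, hxe⟩ := intermediate_value_Icc (by norm_num : (-1:ℝ) ≤ 1) hcont.continuousOn hmem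
  refine ⟨M ∩ Set.Ioc (-1) x, hM.inter measurableSet_Ioc, Set.inter_subset_left, ?_⟩
  rw [← hxe]
  simp only
  rw [intervalIntegral.integral_of_le hx.1, setIntegral_indicator hM, Set.inter_comm]

/-- Bob's density built from Alice's one. -/
lemma exists_good (δ Δ : ℝ) (hδ : 0 < δ) (vA : ℝ → ℝ)
    (hA : IsValueDensity δ Δ vA)
    (F : ℕ → Set (Set ℝ)) (hmono : Monotone F) (hfin : ∀ k, (F k).Finite)
    (hmeas : ∀ k, ∀ S ∈ F k, MeasurableSet S ∧ S ⊆ Set.Icc 0 1) :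
    ∃ vB : ℝ → ℝ, IsValueDensity (3/4*δ) (3/2*Δ) vB ∧ 2/3 ≤ mStackelberg vA vB ∧
      ∀ k, ∀ P ∈ F k, pieceVal vB P ≤ 1/2 → pieceVal vA P ≤ 2/3 - (1/2)^k/6 := by
  obtain ⟨hvm, hvb, hvi⟩ := hA
  have hI : MeasurableSet (Set.Icc (0:ℝ) 1) := measurableSet_Icc
  let f : ℝ → ℝ := (Set.Icc (0:ℝ) 1).indicator vA
  have hfm : Measurable f := hvm.indicator hI
  have hnn : ∀ x, 0 ≤ f x := fun x => Set.indicator_nonneg (fun y hy => hδ.le.trans (hvb y hy).1) x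
  have hvint : IntegrableOn vA (Set.Icc (0:ℝ) 1) := by
    by_contra h
    have := integral_undef h
    rw [this] at hvi
    norm_num at hvi
  have hfint : Integrable f := (integrable_indicator_iff hI).2 hvint
  let μ : Measure ℝ := volume.withDensity (fun x => ENNReal.ofReal (f x))
  have hfinm : IsFiniteMeasure μ := isFiniteMeasure_withDensity_ofReal hfint.2
  have hμ : ∀ S, MeasurableSet S → μ.real S = ∫ x in S, f x := by
    intro S hS
    rw [integral_eq_lintegral_of_nonneg_ae (Filter.Eventually.of_forall hnn)
      hfm.aestronglyMeasurable, Measure.real, withDensity_apply _ hS]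
  have hμI : ∀ S, MeasurableSet S → μ.real S = pieceVal vA (Set.Icc 0 1 ∩ S) := by
    intro S hS
    rw [hμ S hS, pieceVal, setIntegral_indicator hI, Set.inter_comm]
  have hμs : ∀ S, MeasurableSet S → S ⊆ Set.Icc 0 1 → μ.real S = pieceVal vA S := by
    intro S hS hs
    rw [hμI S hS, Set.inter_eq_right.2 hs]
  have hμu : μ.real Set.univ = 1 := by
    rw [hμI _ MeasurableSet.univ, Set.inter_univ]; exact hvi
  have hbase : ∀ p ∈ Set.Icc (0:ℝ) 1, ∀ M, MeasurableSet M →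
      ∃ N, MeasurableSet N ∧ N ⊆ M ∧ μ.real N = p * μ.real M := by
    intro p hp M hM
    obtain ⟨N, n1, n2, n3⟩ := exists_split f hfint
      (fun x hx => Set.indicator_of_notMem hx _) p hp hnn M hM
    exact ⟨N, n1, n2, by rw [hμ N n1, hμ M hM, n3]⟩
  obtain ⟨A, M, hAm, hMm, hM0, hMs, hAM⟩ := layered μ hbase (fun k => insert Set.univ (F k))
    (fun i j hij => Set.insert_subset_insert (hmono hij)) (fun k => (hfin k).insert _)
    (by
      rintro k S (rfl | hS)
      · exact MeasurableSet.univ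
      · exact (hmeas k S hS).1) (Set.mem_insert _ _)
  have hMs' : ∀ k, μ.real (M k) = (1/2)^k := by intro k; rw [hMs, hμu, mul_one]
  have hAMk : ∀ k, μ.real (A ∩ M k) = 2/3 * (1/2)^k := by
    intro k
    have := hAM k Set.univ (Set.mem_insert _ _)
    simpa [hMs' k] using this
  have hAt : μ.real A = 2/3 := by
    have := hAMk 0
    rw [hM0] at this
    simpa using this
  let vB : ℝ → ℝ := fun x => (3/2) * vA x - (3/4) * A.indicator vA x
  have hvBm : Measurable vB := (hvm.const_mul _).sub ((hvm.indicator hAm).const_mul _)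
  have hB : ∀ S, MeasurableSet S → S ⊆ Set.Icc 0 1 →
      pieceVal vB S = 3/2 * μ.real S - 3/4 * μ.real (S ∩ A) := by
    intro S hS hs
    have i1 : IntegrableOn vA S := hvint.mono_set hs
    rw [hμs S hS hs, hμs (S ∩ A) (hS.inter hAm) (Set.inter_subset_left.trans hs)]
    simp only [pieceVal, vB]
    rw [integral_sub (i1.const_mul _) ((i1.indicator hAm).const_mul _),
      integral_const_mul, integral_const_mul, setIntegral_indicator hAm]
  have hAI : μ.real (Set.Icc 0 1 ∩ A) = 2/3 := by
    rw [hμI _ (hI.inter hAm), ← Set.inter_assoc, Set.inter_self, ← hμI _ hAm, hAt]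
  have hII : μ.real (Set.Icc 0 1) = 1 := by rw [hμs _ hI subset_rfl]; exact hvi
  refine ⟨vB, ⟨hvBm, ?_, ?_⟩, ?_, ?_⟩
  · intro x hx
    obtain ⟨l, u⟩ := hvb x hx
    by_cases h : x ∈ A
    · simp only [vB, Set.indicator_of_mem h]
      constructor <;> linarith
    · simp only [vB, Set.indicator_of_notMem h]
      constructor <;> linarith
  · have := hB _ hI subset_rfl
    rw [hAI, hII] at this
    change pieceVal vB _ = 1
    rw [this]; norm_num
  · refine le_csSup ⟨1, ?_⟩ ?_
    · rintro u ⟨S, hS, hs, -, rfl⟩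
      rw [← hμs S hS hs, ← hμu]
      exact measureReal_mono (Set.subset_univ _)
    · refine ⟨Set.Icc 0 1 ∩ A, hI.inter hAm, Set.inter_subset_left, ?_, ?_⟩
      · rw [Set.diff_self_inter, hB _ (hI.diff hAm) Set.diff_subset]
        have h1 := measureReal_inter_add_diff (μ := μ) (s := Set.Icc 0 1) hAm
        rw [hAI, hII] at h1
        have h2 : (Set.Icc (0:ℝ) 1 \ A) ∩ A = ∅ := by ext x; simp
        rw [h2, measureReal_empty]
        linarith
      · rw [← hμs _ (hI.inter hAm) Set.inter_subset_left, hAI]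
  · intro k P hP hle
    obtain ⟨hPm, hPs⟩ := hmeas k P hP
    rw [hB P hPm hPs] at hle
    rw [← hμs P hPm hPs]
    have e := hAM k P (Set.mem_insert_of_mem _ hP)
    have a1 := measureReal_inter_add_diff (μ := μ) (s := P) (hMm k)
    have a2 := measureReal_inter_add_diff (μ := μ) (s := P ∩ A) (hMm k)
    have a3 := measureReal_inter_add_diff (μ := μ) (s := A) (hMm k)
    have s1 : P ∩ A ∩ M k = A ∩ M k ∩ P := by
      ext x; simp only [Set.mem_inter_iff]; tauto
    rw [s1, e, Set.inter_comm (M k) P] at a2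
    rw [hAMk, hAt] at a3
    have b1 : μ.real ((P ∩ A) \ M k) ≤ μ.real (P \ M k) :=
      measureReal_mono (fun x hx => ⟨hx.1.1, hx.2⟩)
    have b2 : μ.real ((P ∩ A) \ M k) ≤ μ.real (A \ M k) :=
      measureReal_mono (fun x hx => ⟨hx.1.2, hx.2⟩)
    linarith

lemma length_mChoices (vA vB : ℝ → ℝ) (SA : MAliceStrategy) (T t : ℕ) :
    (mChoices vA vB SA T t).length = t := by
  induction t with
  | zero => rfl
  | succ t ih => simp [mChoices, ih]

lemma mPiece_meas (S : Set ℝ) (hS : MeasurableSet S) (b : Bool) :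
    MeasurableSet (mPiece S b) ∧ mPiece S b ⊆ Set.Icc 0 1 := by
  cases b
  · simp only [mPiece]
    exact ⟨measurableSet_Icc.diff hS, Set.diff_subset⟩
  · simp only [mPiece]
    exact ⟨hS.inter measurableSet_Icc, Set.inter_subset_right⟩

/-- The piece that myopic Bob leaves is worth at most one half to him. -/
lemma left_le (δ Δ : ℝ) (vA vB : ℝ → ℝ) (hB : IsValueDensity δ Δ vB) (S : Set ℝ)
    (hS : MeasurableSet S) : pieceVal vB (mPiece S (!(mMyopic vA vB S))) ≤ 1/2 := by
  have hvint : IntegrableOn vB (Set.Icc (0:ℝ) 1) := by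
    by_contra h
    have := integral_undef h
    have h2 := hB.2.2
    rw [this] at h2
    norm_num at h2
  have hsum : pieceVal vB (mPiece S true) + pieceVal vB (mPiece S false) = 1 := by
    rw [← hB.2.2, ← integral_inter_add_diff hS hvint, Set.inter_comm]
    simp [pieceVal, mPiece]
  unfold mMyopic
  split_ifs <;> simp only [Bool.not_true, Bool.not_false] <;> linarith

/-- measurable-cut game, myopic Bob, lower bound: there exist `c > 0`,
`T₀ ∈ ℕ`, and density bounds `0 < δ' ≤ Δ'`, depending only on `δ` and `Δ`, such that for
every Alice value density and every deterministic Alice strategy there is a Bob value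
density (with bounds `δ', Δ'`) against which Alice's Stackelberg regret over every horizon
`T ≥ T₀` is at least `c·T/(log T)²`. -/
theorem measurable_cut_myopic_lower (δ Δ : ℝ) (hδ : 0 < δ) (hδΔ : δ ≤ Δ) :
    ∃ (c : ℝ) (T₀ : ℕ) (δ' Δ' : ℝ), 0 < c ∧ 0 < δ' ∧ δ' ≤ Δ' ∧
      ∀ vA : ℝ → ℝ, IsValueDensity δ Δ vA →
        ∀ SA : MAliceStrategy,
          (∀ T h, MeasurableSet (SA T h) ∧ SA T h ⊆ Set.Icc 0 1) →
          ∃ vB : ℝ → ℝ, IsValueDensity δ' Δ' vB ∧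
            ∀ T : ℕ, T₀ ≤ T →
              c * T / (Real.log T) ^ 2 ≤ mAliceRegret vA vB SA T := by
  refine ⟨1/12, 3, 3/4*δ, 3/2*Δ, by norm_num, by positivity, by linarith, ?_⟩
  intro vA hA SA hSA
  let F : ℕ → Set (Set ℝ) := fun k =>
    Set.image (fun q : ℕ × List Bool × Bool => mPiece (SA q.1 q.2.1) q.2.2)
      (Set.Iio (2^2^(k+1)) ×ˢ ({l : List Bool | l.length < 2^2^(k+1)} ×ˢ Set.univ))
  have hmono : Monotone F := by
    intro i j hij
    refine Set.image_mono ?_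
    have h : 2^2^(i+1) ≤ 2^2^(j+1) :=
      Nat.pow_le_pow_right (by norm_num) (Nat.pow_le_pow_right (by norm_num) (by omega))
    rintro ⟨T, l, b⟩ ⟨h1, h2, h3⟩
    exact ⟨lt_of_lt_of_le h1 h, lt_of_lt_of_le h2 h, h3⟩
  have hfin : ∀ k, (F k).Finite := fun k =>
    ((Set.finite_Iio _).prod ((List.finite_length_lt Bool _).prod Set.finite_univ)).image _
  have hmeas : ∀ k, ∀ S ∈ F k, MeasurableSet S ∧ S ⊆ Set.Icc 0 1 := by
    rintro k S ⟨q, -, rfl⟩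
    exact mPiece_meas _ (hSA _ _).1 _
  obtain ⟨vB, hB, hst, hgap⟩ := exists_good δ Δ hδ vA hA F hmono hfin hmeas
  refine ⟨vB, hB, ?_⟩
  intro T hT
  set m := Nat.log 2 T with hm
  set k := Nat.log 2 m with hk
  have hT0 : T ≠ 0 := by omega
  have hm1 : 1 ≤ m := Nat.log_pos (by norm_num) (by omega)
  have hkm : 2^k ≤ m := Nat.pow_log_le_self 2 (by omega)
  have hmT : 2^m ≤ T := Nat.pow_log_le_self 2 hT0
  have hmk : m < 2^(k+1) := Nat.lt_pow_succ_log_self (by norm_num) m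
  have hTm : T < 2^(m+1) := Nat.lt_pow_succ_log_self (by norm_num) T
  have hTk : T < 2^2^(k+1) := lt_of_lt_of_le hTm (Nat.pow_le_pow_right (by norm_num) hmk)
  have hterm : ∀ t ∈ Finset.range T, (1/2:ℝ)^k/6 ≤ mStackelberg vA vB -
      pieceVal vA (mPiece (SA T (mChoices vA vB SA T t))
        (!(mMyopic vA vB (SA T (mChoices vA vB SA T t))))) := by
    intro t ht
    have ht' := Finset.mem_range.1 ht
    have := hgap k _ ⟨(T, mChoices vA vB SA T t, !(mMyopic vA vB (SA T (mChoices vA vB SA T t)))),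
      ⟨hTk, by
        change (mChoices vA vB SA T t).length < _
        rw [length_mChoices]; omega, Set.mem_univ _⟩, rfl⟩
      (left_le _ _ vA vB hB _ (hSA _ _).1)
    simp only at this
    linarith
  have hsum := Finset.card_nsmul_le_sum _ _ _ hterm
  rw [Finset.card_range, nsmul_eq_mul] at hsum
  refine le_trans ?_ hsum
  have hTr : (3:ℝ) ≤ T := by exact_mod_cast hT
  have hlog1 : 1 ≤ Real.log T := by
    rw [Real.le_log_iff_exp_le (by linarith)]
    linarith [Real.exp_one_lt_d9]
  have hlog2 : (2:ℝ)^k ≤ 2 * Real.log T := by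
    have e1 : ((2:ℝ)^m) ≤ T := by exact_mod_cast hmT
    have e2 := Real.log_le_log (by positivity) e1
    rw [Real.log_pow] at e2
    have e3 : (2:ℝ)^k ≤ m := by exact_mod_cast hkm
    have e4 := Real.log_two_gt_d9
    have e5 : (0:ℝ) ≤ m := by positivity
    nlinarith
  have hp : (0:ℝ) < 2^k := by positivity
  have hfinal : (1/12) / (Real.log T)^2 ≤ (1/2:ℝ)^k/6 := by
    rw [one_div_pow, div_div, div_div, div_le_div_iff₀ (by positivity) (by positivity)]
    nlinarith
  calc 1/12 * (T:ℝ) / (Real.log T)^2 = T * ((1/12) / (Real.log T)^2) := by ring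
    _ ≤ T * ((1/2:ℝ)^k/6) := mul_le_mul_of_nonneg_left hfinal (by linarith)

end
end

section
/- For all constants 0 < δ ≤ Δ there exists C > 0 such that: for every Alice value density v_A there is a deterministic Alice strategy for the repeated 2-cut game with the property that for every Bob value density v_B and every horizon T ≥ 2, Alice's Stackelberg regret against the myopic Bob over horizon T is at most C·√(T·log T). -/
open MeasureTheory Set

noncomputable section

attribute [local instance] Classical.propDecidable

/-- Extended cut points: `0, c 0, …, c (k-1), 1`. -/
def extCuts (k : ℕ) (c : Fin k → ℝ) : ℕ → ℝ := fun i =>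
  if i = 0 then 0 else if h : i - 1 < k then c ⟨i - 1, h⟩ else 1

/-- A valid vector of `k` cut points: nondecreasing, within `[0,1]`. -/
def ValidCuts (k : ℕ) (c : Fin k → ℝ) : Prop :=
  Monotone c ∧ ∀ i, c i ∈ Set.Icc (0:ℝ) 1

/-- The two pieces of the alternating partition induced by cuts `c`:
`true` gives the union of even-indexed intervals, `false` the odd-indexed ones. -/
def altPiece (k : ℕ) (c : Fin k → ℝ) (b : Bool) : Set ℝ :=
  ⋃ i ∈ Finset.range (k + 1),
    if decide (i % 2 = 0) = b then Set.Icc (extCuts k c i) (extCuts k c (i + 1)) else ∅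

/-- Alice's Stackelberg value with `k` cuts: max of `V_A(Z_A)` over alternating partitions
`(Z_A, Z_B)` induced by `k` cut points with `V_B(Z_B) ≥ 1/2`. -/
def stackelbergValue (k : ℕ) (vA vB : ℝ → ℝ) : ℝ :=
  sSup { u : ℝ | ∃ (c : Fin k → ℝ) (b : Bool), ValidCuts k c ∧
    1 / 2 ≤ pieceVal vB (altPiece k c (!b)) ∧ u = pieceVal vA (altPiece k c b) }

/-- A history of play: the list of (Alice's cuts, Bob's choice) in past rounds. -/
abbrev Hist (k : ℕ) := List ((Fin k → ℝ) × Bool)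

/-- Alice's deterministic strategy: horizon and history ↦ next cut vector. -/
abbrev AliceStrategy (k : ℕ) := ℕ → Hist k → (Fin k → ℝ)

/-- Bob's deterministic strategy: horizon, history, and Alice's current cuts ↦ choice. -/
abbrev BobStrategy (k : ℕ) := ℕ → Hist k → (Fin k → ℝ) → Bool

/-- The history of play after `t` rounds. -/
def playHist (k : ℕ) (SA : AliceStrategy k) (SB : BobStrategy k) (T : ℕ) : ℕ → Hist k
  | 0 => []
  | t + 1 =>
      let h := playHist k SA SB T t
      let cuts := SA T h
      h ++ [(cuts, SB T h cuts)]

/-- Alice's cuts in round `t` (0-indexed). -/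
def roundCuts (k : ℕ) (SA : AliceStrategy k) (SB : BobStrategy k) (T t : ℕ) : Fin k → ℝ :=
  SA T (playHist k SA SB T t)

/-- Bob's choice in round `t` (0-indexed). -/
def roundChoice (k : ℕ) (SA : AliceStrategy k) (SB : BobStrategy k) (T t : ℕ) : Bool :=
  SB T (playHist k SA SB T t) (roundCuts k SA SB T t)

/-- Alice's Stackelberg regret over horizon `T`: in each round she receives the value of
the piece Bob did not choose. -/
def aliceRegret (k : ℕ) (vA vB : ℝ → ℝ) (SA : AliceStrategy k) (SB : BobStrategy k)
    (T : ℕ) : ℝ :=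
  ∑ t ∈ Finset.range T,
    (stackelbergValue k vA vB -
      pieceVal vA (altPiece k (roundCuts k SA SB T t) (!(roundChoice k SA SB T t))))

/-- Bob's regret over horizon `T` relative to always choosing his preferred piece. -/
def bobRegret (k : ℕ) (vB : ℝ → ℝ) (SA : AliceStrategy k) (SB : BobStrategy k) (T : ℕ) : ℝ :=
  ∑ t ∈ Finset.range T,
    (max (pieceVal vB (altPiece k (roundCuts k SA SB T t) true))
        (pieceVal vB (altPiece k (roundCuts k SA SB T t) false)) -
      pieceVal vB (altPiece k (roundCuts k SA SB T t) (roundChoice k SA SB T t)))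

/-- Bob's strategy guarantees regret at most `R T` against every Alice strategy and horizon. -/
def BobGuarantees (k : ℕ) (vB : ℝ → ℝ) (SB : BobStrategy k) (R : ℕ → ℝ) : Prop :=
  ∀ (SA : AliceStrategy k) (T : ℕ), bobRegret k vB SA SB T ≤ R T

/-- The myopic Bob: chooses the piece of larger `V_B`-value, breaking ties towards
the piece of smaller `V_A`-value. -/
def myopicBob (k : ℕ) (vA vB : ℝ → ℝ) : BobStrategy k := fun _ _ c =>
  if pieceVal vB (altPiece k c false) < pieceVal vB (altPiece k c true) then true
  else if pieceVal vB (altPiece k c true) < pieceVal vB (altPiece k c false) then false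
  else if pieceVal vA (altPiece k c true) ≤ pieceVal vA (altPiece k c false) then true
  else false

/-- Alice's strategy always produces valid cut vectors. -/
def AliceValid (k : ℕ) (SA : AliceStrategy k) : Prop := ∀ T h, ValidCuts k (SA T h)

/-- Cumulative value. -/
def cumVal (v : ℝ → ℝ) (x : ℝ) : ℝ := ∫ t in (0:ℝ)..x, v t

theorem dens_integrable {δ Δ : ℝ} {v : ℝ → ℝ} (h : IsValueDensity δ Δ v) :
    IntegrableOn v (Set.Icc (0:ℝ) 1) := by
  by_contra hc
  have h1 := h.2.2
  rw [integral_undef hc] at h1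
  norm_num at h1

theorem dens_ii {δ Δ : ℝ} {v : ℝ → ℝ} (h : IsValueDensity δ Δ v) {x y : ℝ}
    (hx : x ∈ Set.Icc (0:ℝ) 1) (hy : y ∈ Set.Icc (0:ℝ) 1) :
    IntervalIntegrable v volume x y := by
  refine IntegrableOn.intervalIntegrable ((dens_integrable h).mono_set ?_)
  exact Set.uIcc_subset_Icc hx hy

theorem cumVal_sub {δ Δ : ℝ} {v : ℝ → ℝ} (h : IsValueDensity δ Δ v) {x y : ℝ}
    (hx : x ∈ Set.Icc (0:ℝ) 1) (hy : y ∈ Set.Icc (0:ℝ) 1) :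
    cumVal v y - cumVal v x = ∫ t in x..y, v t := by
  have h0 : (0:ℝ) ∈ Set.Icc (0:ℝ) 1 := by simp
  unfold cumVal
  rw [intervalIntegral.integral_interval_sub_left (dens_ii h h0 hy) (dens_ii h h0 hx)]

theorem icc_val {δ Δ : ℝ} {v : ℝ → ℝ} (h : IsValueDensity δ Δ v) {x y : ℝ}
    (hx : x ∈ Set.Icc (0:ℝ) 1) (hy : y ∈ Set.Icc (0:ℝ) 1) (hxy : x ≤ y) :
    ∫ t in Set.Icc x y, v t = cumVal v y - cumVal v x := by
  rw [cumVal_sub h hx hy, integral_Icc_eq_integral_Ioc, intervalIntegral.integral_of_le hxy]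

theorem cumVal_zero (v : ℝ → ℝ) : cumVal v 0 = 0 := by simp [cumVal]

theorem cumVal_one {δ Δ : ℝ} {v : ℝ → ℝ} (h : IsValueDensity δ Δ v) : cumVal v 1 = 1 := by
  have := icc_val h (x := 0) (y := 1) (by simp) (by simp) (by norm_num)
  rw [h.2.2, cumVal_zero] at this
  linarith

theorem cumVal_bounds {δ Δ : ℝ} {v : ℝ → ℝ} (h : IsValueDensity δ Δ v) {x y : ℝ}
    (hx : x ∈ Set.Icc (0:ℝ) 1) (hy : y ∈ Set.Icc (0:ℝ) 1) (hxy : x ≤ y) :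
    δ * (y - x) ≤ cumVal v y - cumVal v x ∧ cumVal v y - cumVal v x ≤ Δ * (y - x) := by
  rw [cumVal_sub h hx hy]
  have e : ∀ c : ℝ, c * (y - x) = ∫ _ in x..y, c := by
    intro c; simp [mul_comm]
  have hb : ∀ t ∈ Set.Icc x y, δ ≤ v t ∧ v t ≤ Δ := fun t ht =>
    h.2.1 t ⟨hx.1.trans ht.1, ht.2.trans hy.2⟩
  constructor
  · rw [e]
    exact intervalIntegral.integral_mono_on hxy (by simp) (dens_ii h hx hy)
      (fun t ht => (hb t ht).1)
  · rw [e]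
    exact intervalIntegral.integral_mono_on hxy (dens_ii h hx hy) (by simp)
      (fun t ht => (hb t ht).2)

theorem altPiece_true (c : Fin 2 → ℝ) :
    altPiece 2 c true = Set.Icc 0 (c 0) ∪ Set.Icc (c 1) 1 := by
  ext x
  simp [altPiece, Finset.range_add_one, extCuts]
  tauto

theorem altPiece_false (c : Fin 2 → ℝ) :
    altPiece 2 c false = Set.Icc (c 0) (c 1) := by
  ext x
  simp [altPiece, Finset.range_add_one, extCuts]

theorem val_false {δ Δ : ℝ} {v : ℝ → ℝ} (h : IsValueDensity δ Δ v) {c : Fin 2 → ℝ}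
    (hc : ValidCuts 2 c) :
    pieceVal v (altPiece 2 c false) = cumVal v (c 1) - cumVal v (c 0) := by
  rw [altPiece_false, pieceVal, icc_val h (hc.2 0) (hc.2 1) (hc.1 (by decide))]

theorem val_true {δ Δ : ℝ} {v : ℝ → ℝ} (h : IsValueDensity δ Δ v) {c : Fin 2 → ℝ}
    (hc : ValidCuts 2 c) :
    pieceVal v (altPiece 2 c true) = 1 - (cumVal v (c 1) - cumVal v (c 0)) := by
  have h01 : c 0 ≤ c 1 := hc.1 (by decide)
  have h0 := hc.2 0
  have h1 := hc.2 1
  have hI := dens_integrable h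
  rw [altPiece_true, pieceVal]
  rw [setIntegral_union₀ _ measurableSet_Icc.nullMeasurableSet
    (hI.mono_set (Set.Icc_subset_Icc le_rfl h0.2)) (hI.mono_set (Set.Icc_subset_Icc h1.1 le_rfl))]
  · rw [icc_val h (by simp) h0 h0.1, icc_val h h1 (by simp) h1.2, cumVal_zero, cumVal_one h]
    ring
  · have hs : Set.Icc 0 (c 0) ∩ Set.Icc (c 1) 1 ⊆ {c 0} := by
      rintro x ⟨hx, hx'⟩
      exact le_antisymm hx.2 (h01.trans hx'.1)
    exact measure_mono_null hs (by simp)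

theorem val_nonneg {δ Δ : ℝ} (hδ : 0 < δ) {v : ℝ → ℝ} (h : IsValueDensity δ Δ v) {c : Fin 2 → ℝ}
    (hc : ValidCuts 2 c) (b : Bool) :
    0 ≤ pieceVal v (altPiece 2 c b) ∧ pieceVal v (altPiece 2 c b) ≤ 1 := by
  have h01 : c 0 ≤ c 1 := hc.1 (by decide)
  have h0 := hc.2 0
  have h1 := hc.2 1
  have a1 := (cumVal_bounds h (x := 0) (by simp) h0 h0.1).1
  have a2 := (cumVal_bounds h h0 h1 h01).1
  have a3 := (cumVal_bounds h (y := 1) h1 (by simp) h1.2).1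
  rw [cumVal_zero] at a1
  rw [cumVal_one h] at a3
  have b1 : 0 ≤ δ * (c 0 - 0) := mul_nonneg hδ.le (by linarith [h0.1])
  have b2 : 0 ≤ δ * (c 1 - c 0) := mul_nonneg hδ.le (by linarith)
  have b3 : 0 ≤ δ * (1 - c 1) := mul_nonneg hδ.le (by linarith [h1.2])
  cases b
  · rw [val_false h hc]; constructor <;> linarith
  · rw [val_true h hc]; constructor <;> linarith

/-- Grid point. -/
def gp (N k : ℕ) : ℝ := min ((k:ℝ) / N) 1

theorem gp_mem (N k : ℕ) : gp N k ∈ Set.Icc (0:ℝ) 1 := by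
  refine ⟨le_min (by positivity) (by norm_num), min_le_right _ _⟩

theorem gp_mono (N : ℕ) {a b : ℕ} (h : a ≤ b) : gp N a ≤ gp N b := by
  unfold gp; gcongr

theorem gp_zero (N : ℕ) : gp N 0 = 0 := by simp [gp]

theorem gp_big {N k : ℕ} (hN : 0 < N) (h : N ≤ k) : gp N k = 1 := by
  unfold gp
  apply min_eq_right
  rw [le_div_iff₀ (by positivity)]
  simpa using (by exact_mod_cast h : (N:ℝ) ≤ k)

theorem first_cross (f : ℕ → ℕ) (a : ℕ) : ∀ L, (∀ t < L, f (t+1) ≤ f t + 1) → f 0 ≤ a →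
    a + 1 ≤ f L → ∃ t < L, f t = a ∧ f (t+1) = a + 1 := by
  intro L
  induction L with
  | zero => intro _ h1 h2; omega
  | succ L ih =>
    intro hs h0 hL
    by_cases h : a + 1 ≤ f L
    · obtain ⟨t, ht, h'⟩ := ih (fun t ht => hs t (by omega)) h0 h
      exact ⟨t, by omega, h'⟩
    · have := hs L (by omega)
      exact ⟨L, by omega, by omega, by omega⟩

structure Walk (G : ℝ → ℝ) (N : ℕ) (I J : ℕ → ℕ) (ch : ℕ → Bool) : Prop where
  I0 : I 0 = 0
  J0 : J 0 = 0
  tr : ∀ t < 2 * N + 1, ch t = true →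
    G (gp N (J t)) - G (gp N (min (I t) (J t))) ≤ 1/2 ∧ J (t+1) = J t + 1 ∧ I (t+1) = I t
  fa : ∀ t < 2 * N + 1, ch t = false →
    1/2 ≤ G (gp N (J t)) - G (gp N (min (I t) (J t))) ∧ J (t+1) = J t ∧ I (t+1) = I t + 1

theorem walk_inv {G : ℝ → ℝ} {N : ℕ} {I J : ℕ → ℕ} {ch : ℕ → Bool} (hN : 0 < N)
    (hG : StrictMonoOn G (Set.Icc 0 1)) (w : Walk G N I J ch) :
    ∀ t ≤ 2 * N + 1, I t ≤ J t ∧ I t ≤ N ∧ I t + J t = t ∧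
      (I t = 0 ∨ 1/2 ≤ G (gp N (J t)) - G (gp N (I t - 1))) ∧
      (J t = 0 ∨ G (gp N (J t - 1)) - G (gp N (I t)) ≤ 1/2) := by
  intro t
  induction t with
  | zero => intro _; simp [w.I0, w.J0]
  | succ t ih =>
    intro ht
    obtain ⟨h1, h2, h3, h4, h5⟩ := ih (by omega)
    have hm : min (I t) (J t) = I t := min_eq_left h1
    have mono : ∀ a b : ℕ, a ≤ b → G (gp N a) ≤ G (gp N b) := fun a b hab =>
      hG.monotoneOn (gp_mem _ _) (gp_mem _ _) (gp_mono N hab)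
    cases hc : ch t
    · obtain ⟨e1, e2, e3⟩ := w.fa t (by omega) hc
      rw [hm] at e1
      have hlt : I t < J t := by
        by_contra hcon
        have := mono (J t) (I t) (by omega)
        linarith
      have hlN : I t < N := by
        by_contra hcon
        rw [gp_big hN (by omega), gp_big hN (by omega)] at e1
        linarith
      rw [e2, e3]
      refine ⟨by omega, by omega, by omega, Or.inr (by simpa using e1), ?_⟩
      rcases h5 with h5 | h5
      · exact Or.inl h5
      · right
        have := mono (I t) (I t + 1) (by omega)
        linarith
    · obtain ⟨e1, e2, e3⟩ := w.tr t (by omega) hc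
      rw [hm] at e1
      rw [e2, e3]
      refine ⟨by omega, by omega, by omega, ?_, Or.inr (by simpa using e1)⟩
      rcases h4 with h4 | h4
      · exact Or.inl h4
      · right
        have := mono (J t) (J t + 1) (by omega)
        linarith

theorem walk_step {G : ℝ → ℝ} {N : ℕ} {I J : ℕ → ℕ} {ch : ℕ → Bool} 
    (w : Walk G N I J ch) : ∀ t < 2 * N + 1, I (t+1) ≤ I t + 1 ∧ J (t+1) ≤ J t + 1 := by
  intro t ht
  cases hc : ch t
  · have := w.fa t ht hc; omega
  · have := w.tr t ht hc; omega

theorem walk_A {G : ℝ → ℝ} {N : ℕ} {I J : ℕ → ℕ} {ch : ℕ → Bool} (hN : 0 < N)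
    (hG : StrictMonoOn G (Set.Icc 0 1)) (w : Walk G N I J ch) {x y : ℝ}
    (hx : x ∈ Set.Icc (0:ℝ) 1) (hy : y ∈ Set.Icc (0:ℝ) 1) (h : G y - G x ≤ 1/2) :
    ∃ t < 2 * N + 1, ch t = true ∧ gp N (I t) ≤ x + 1 / N ∧ y - 1 / N ≤ gp N (J t) := by
  have hNr : (0:ℝ) < N := by exact_mod_cast hN
  have ha : ∃ a : ℕ, (a:ℝ) ≤ y * N ∧ y * N ≤ a + 1 ∧ a ≤ N := by
    refine ⟨⌊y * N⌋₊, Nat.floor_le (by have := hy.1; positivity), (Nat.lt_floor_add_one _).le, ?_⟩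
    apply Nat.floor_le_of_le
    nlinarith [hy.2]
  obtain ⟨a, a1, a2, a3⟩ := ha
  have hL := walk_inv hN hG w (2 * N + 1) le_rfl
  obtain ⟨t, ht, f1, f2⟩ := first_cross J a (2 * N + 1) (fun t ht => (walk_step w t ht).2)
    (by rw [w.J0]; omega) (by omega)
  have hch : ch t = true := by
    cases hc : ch t
    · have := w.fa t ht hc; omega
    · rfl
  refine ⟨t, ht, hch, ?_, ?_⟩
  · obtain ⟨-, h2, h3, h4, -⟩ := walk_inv hN hG w t ht.le
    rcases h4 with h4 | h4
    · rw [h4, gp_zero]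
      have := hx.1; positivity
    · have hgy : gp N (J t) ≤ y := by
        rw [f1]
        exact (min_le_left _ _).trans (by rw [div_le_iff₀ hNr]; exact a1)
      have g1 := hG.monotoneOn (gp_mem _ _) hy hgy
      have g2 : gp N (I t - 1) ≤ x := by
        rw [← hG.le_iff_le (gp_mem _ _) hx]; linarith
      have g3 : ((I t : ℕ) : ℝ) ≤ ((I t - 1 : ℕ) : ℝ) + 1 := by
        exact_mod_cast (by omega : I t ≤ (I t - 1) + 1)
      have g4 : gp N (I t - 1) = ((I t - 1 : ℕ) : ℝ) / N := by
        apply min_eq_left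
        rw [div_le_one hNr]
        exact_mod_cast (by omega : I t - 1 ≤ N)
      calc gp N (I t) ≤ (I t : ℝ) / N := min_le_left _ _
        _ ≤ (((I t - 1 : ℕ) : ℝ) + 1) / N := by gcongr
        _ = gp N (I t - 1) + 1 / N := by rw [g4]; ring
        _ ≤ _ := by linarith
  · rw [f1]
    have : y ≤ ((a:ℝ) + 1) / N := by rwa [le_div_iff₀ hNr]
    have e : ((a:ℝ) + 1) / N = a / N + 1 / N := by ring
    have : 0 < 1 / (N:ℝ) := by positivity
    exact le_min (by linarith) (by linarith [hy.2])

theorem walk_B {G : ℝ → ℝ} {N : ℕ} {I J : ℕ → ℕ} {ch : ℕ → Bool} (hN : 0 < N)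
    (hG : StrictMonoOn G (Set.Icc 0 1)) (h0 : G 0 = 0) (h1 : G 1 = 1) 
    (w : Walk G N I J ch) {x y : ℝ}
    (hx : x ∈ Set.Icc (0:ℝ) 1) (hy : y ∈ Set.Icc (0:ℝ) 1) (h : 1/2 ≤ G y - G x) :
    ∃ t < 2 * N + 1, ch t = false ∧ x - 1 / N ≤ gp N (I t) ∧ gp N (J t) ≤ y + 1 / N := by
  have hNr : (0:ℝ) < N := by exact_mod_cast hN
  have ha : ∃ a : ℕ, (a:ℝ) ≤ x * N ∧ x * N ≤ a + 1 ∧ (a = 0 ∨ (a:ℝ) < x * N) := by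
    have hxN : 0 ≤ x * N := by have := hx.1; positivity
    rcases hxN.eq_or_lt with h' | h'
    · exact ⟨0, by simp [← h'], by simp [← h'], Or.inl rfl⟩
    · have c1 : 1 ≤ ⌈x * N⌉₊ := Nat.one_le_ceil_iff.2 h'
      have c2 := Nat.ceil_lt_add_one hxN
      have c3 := Nat.le_ceil (x * N)
      refine ⟨⌈x * N⌉₊ - 1, ?_, ?_, Or.inr ?_⟩ <;> push_cast [Nat.cast_sub c1] <;> linarith
  obtain ⟨a, a1, a2, a3⟩ := ha
  have hGy : G y ≤ 1 := by
    rw [← h1]; exact hG.monotoneOn hy (by simp) hy.2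
  have hfin : a + 1 ≤ I (2 * N + 1) := by
    by_contra hcon
    obtain ⟨-, i2, i3, -, i5⟩ := walk_inv hN hG w (2 * N + 1) le_rfl
    rcases i5 with i5 | i5
    · omega
    rw [gp_big hN (by omega), h1] at i5
    have hIa : I (2 * N + 1) ≤ a := by omega
    rcases a3 with a3 | a3
    · have : I (2 * N + 1) = 0 := by omega
      rw [this, gp_zero, h0] at i5
      linarith
    · have hlt : gp N (I (2 * N + 1)) < x := by
        refine (gp_mono N hIa).trans_lt ((min_le_left _ _).trans_lt ?_)
        rwa [div_lt_iff₀ hNr]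
      have := hG (gp_mem _ _) hx hlt
      linarith
  obtain ⟨t, ht, f1, f2⟩ := first_cross I a (2 * N + 1) (fun t ht => (walk_step w t ht).1)
    (by rw [w.I0]; omega) hfin
  have hch : ch t = false := by
    cases hc : ch t
    · rfl
    · have := w.tr t ht hc; omega
  have hpos : 0 < 1 / (N:ℝ) := by positivity
  refine ⟨t, ht, hch, ?_, ?_⟩
  · rw [f1]
    have : x ≤ ((a:ℝ) + 1) / N := by rwa [le_div_iff₀ hNr]
    have e : ((a:ℝ) + 1) / N = a / N + 1 / N := by ring
    exact le_min (by linarith) (by linarith [hx.2])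
  · obtain ⟨-, h2, h3, -, h4⟩ := walk_inv hN hG w t ht.le
    rcases h4 with h4 | h4
    · rw [h4, gp_zero]
      have := hy.1; positivity
    · have hgx : gp N (I t) ≤ x := by
        rw [f1]
        exact (min_le_left _ _).trans (by rw [div_le_iff₀ hNr]; exact a1)
      have g1 := hG.monotoneOn (gp_mem _ _) hx hgx
      have g2 : gp N (J t - 1) ≤ y := by
        rw [← hG.le_iff_le (gp_mem _ _) hy]; linarith
      have g3 : ((J t : ℕ) : ℝ) ≤ ((J t - 1 : ℕ) : ℝ) + 1 := by
        exact_mod_cast (by omega : J t ≤ (J t - 1) + 1)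
      rcases min_le_iff.1 g2 with g4 | g4
      · calc gp N (J t) ≤ (J t : ℝ) / N := min_le_left _ _
          _ ≤ (((J t - 1 : ℕ) : ℝ) + 1) / N := by gcongr
          _ = ((J t - 1 : ℕ) : ℝ) / N + 1 / N := by ring
          _ ≤ _ := by linarith
      · linarith [(gp_mem N (J t)).2]

/-- Exploration cut. -/
def explCut (N i j : ℕ) : Fin 2 → ℝ := ![gp N (min i j), gp N j]

theorem pair_valid {x y : ℝ} (hx : x ∈ Set.Icc (0:ℝ) 1) (hy : y ∈ Set.Icc (0:ℝ) 1)
    (hxy : x ≤ y) : ValidCuts 2 ![x, y] := by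
  constructor
  · intro a b hab
    fin_cases a <;> fin_cases b <;> simp_all
  · intro i
    fin_cases i
    · exact hx
    · exact hy

theorem explCut_valid (N i j : ℕ) : ValidCuts 2 (explCut N i j) :=
  pair_valid (gp_mem _ _) (gp_mem _ _) (gp_mono N (min_le_right _ _))

/-- Entry `e` is a best valid entry in history `h`. -/
def IsBest (vA : ℝ → ℝ) (h : Hist 2) (e : (Fin 2 → ℝ) × Bool) : Prop :=
  e ∈ h ∧ ValidCuts 2 e.1 ∧ ∀ e' ∈ h,
    pieceVal vA (altPiece 2 e'.1 (!e'.2)) ≤ pieceVal vA (altPiece 2 e.1 (!e.2))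

/-- The strategy: staircase walk, then repeat the best observed cut. -/
def stairStrategy (vA : ℝ → ℝ) : AliceStrategy 2 := fun T h =>
  if h.length < 2 * (Nat.sqrt T + 1) + 1 then
    explCut (Nat.sqrt T + 1) (h.countP (fun e => !e.2)) (h.countP (fun e => e.2))
  else if hx : ∃ e, IsBest vA h e then hx.choose.1 else explCut 1 0 0

theorem stair_valid (vA : ℝ → ℝ) : AliceValid 2 (stairStrategy vA) := by
  intro T h
  unfold stairStrategy
  split_ifs with h1 h2
  · exact explCut_valid _ _ _
  · exact h2.choose_spec.2.1
  · exact explCut_valid _ _ _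

theorem hist_length (SA : AliceStrategy 2) (SB : BobStrategy 2) (T t : ℕ) :
    (playHist 2 SA SB T t).length = t := by
  induction t with
  | zero => rfl
  | succ t ih => simp [playHist, ih]

theorem hist_mem (SA : AliceStrategy 2) (SB : BobStrategy 2) (T t : ℕ)
    (e : (Fin 2 → ℝ) × Bool) :
    e ∈ playHist 2 SA SB T t ↔ ∃ s < t, e = (roundCuts 2 SA SB T s, roundChoice 2 SA SB T s) := by
  induction t with
  | zero => simp [playHist]
  | succ t ih =>
    simp only [playHist, List.mem_append, ih, List.mem_singleton]
    constructor
    · rintro (⟨s, hs, rfl⟩ | rfl)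
      · exact ⟨s, by omega, rfl⟩
      · exact ⟨t, by omega, rfl⟩
    · rintro ⟨s, hs, rfl⟩
      rcases Nat.lt_succ_iff_lt_or_eq.1 hs with h | rfl
      · exact Or.inl ⟨s, h, rfl⟩
      · exact Or.inr rfl

theorem bob_spec {δ Δ : ℝ} {vA vB : ℝ → ℝ} (hB : IsValueDensity δ Δ vB) {c : Fin 2 → ℝ}
    (hc : ValidCuts 2 c) (T : ℕ) (h : Hist 2) :
    (myopicBob 2 vA vB T h c = true → cumVal vB (c 1) - cumVal vB (c 0) ≤ 1/2) ∧
    (myopicBob 2 vA vB T h c = false → 1/2 ≤ cumVal vB (c 1) - cumVal vB (c 0)) := by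
  have e1 := val_true hB hc
  have e2 := val_false hB hc
  unfold myopicBob
  constructor <;> intro hh <;> split_ifs at hh <;> first | linarith | simp at hh

theorem stair_walk {δ Δ : ℝ} {vA vB : ℝ → ℝ} (hB : IsValueDensity δ Δ vB) (T : ℕ) :
    Walk (cumVal vB) (Nat.sqrt T + 1)
      (fun t => (playHist 2 (stairStrategy vA) (myopicBob 2 vA vB) T t).countP (fun e => !e.2))
      (fun t => (playHist 2 (stairStrategy vA) (myopicBob 2 vA vB) T t).countP (fun e => e.2))
      (roundChoice 2 (stairStrategy vA) (myopicBob 2 vA vB) T) ∧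
    ∀ t < 2 * (Nat.sqrt T + 1) + 1, roundCuts 2 (stairStrategy vA) (myopicBob 2 vA vB) T t =
      explCut (Nat.sqrt T + 1)
       ((playHist 2 (stairStrategy vA) (myopicBob 2 vA vB) T t).countP (fun e => !e.2))
       ((playHist 2 (stairStrategy vA) (myopicBob 2 vA vB) T t).countP (fun e => e.2)) := by
  have hcut : ∀ t < 2 * (Nat.sqrt T + 1) + 1,
      roundCuts 2 (stairStrategy vA) (myopicBob 2 vA vB) T t =
      explCut (Nat.sqrt T + 1)
       ((playHist 2 (stairStrategy vA) (myopicBob 2 vA vB) T t).countP (fun e => !e.2))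
       ((playHist 2 (stairStrategy vA) (myopicBob 2 vA vB) T t).countP (fun e => e.2)) := by
    intro t ht
    rw [roundCuts]
    conv_lhs => unfold stairStrategy
    rw [if_pos]
    · rfl
    · exact (hist_length _ _ _ _).trans_lt ht
  refine ⟨⟨rfl, rfl, ?_, ?_⟩, hcut⟩
  · intro t ht hc
    have hb := (bob_spec (vA := vA) hB (stair_valid vA T (playHist 2 (stairStrategy vA) (myopicBob 2 vA vB) T t))
      T (playHist 2 (stairStrategy vA) (myopicBob 2 vA vB) T t)).1 hc
    have hcc := hcut t ht
    unfold roundCuts at hcc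
    rw [hcc] at hb
    have hc' : myopicBob 2 vA vB T (playHist 2 (stairStrategy vA) (myopicBob 2 vA vB) T t)
      (stairStrategy vA T (playHist 2 (stairStrategy vA) (myopicBob 2 vA vB) T t)) = true := hc
    refine ⟨by simpa [explCut] using hb, ?_, ?_⟩
    · simp only [playHist, List.countP_append, hc']; simp
    · simp only [playHist, List.countP_append, hc']; simp
  · intro t ht hc
    have hb := (bob_spec (vA := vA) hB (stair_valid vA T (playHist 2 (stairStrategy vA) (myopicBob 2 vA vB) T t))
      T (playHist 2 (stairStrategy vA) (myopicBob 2 vA vB) T t)).2 hc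
    have hcc := hcut t ht
    unfold roundCuts at hcc
    rw [hcc] at hb
    have hc' : myopicBob 2 vA vB T (playHist 2 (stairStrategy vA) (myopicBob 2 vA vB) T t)
      (stairStrategy vA T (playHist 2 (stairStrategy vA) (myopicBob 2 vA vB) T t)) = false := hc
    refine ⟨by simpa [explCut] using hb, ?_, ?_⟩
    · simp only [playHist, List.countP_append, hc']; simp
    · simp only [playHist, List.countP_append, hc']; simp

theorem cum_strict {δ Δ : ℝ} (hδ : 0 < δ) {v : ℝ → ℝ} (h : IsValueDensity δ Δ v) :
    StrictMonoOn (cumVal v) (Set.Icc 0 1) := by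
  intro x hx y hy hxy
  have := (cumVal_bounds h hx hy hxy.le).1
  have : 0 < δ * (y - x) := mul_pos hδ (by linarith)
  linarith

/-- One-sided Lipschitz bound. -/
theorem cum_lip {δ Δ : ℝ} (hδ : 0 < δ) (hΔ : δ ≤ Δ) {v : ℝ → ℝ} (h : IsValueDensity δ Δ v)
    {x y ε : ℝ} (hε : 0 ≤ ε)
    (hx : x ∈ Set.Icc (0:ℝ) 1) (hy : y ∈ Set.Icc (0:ℝ) 1) (hxy : y ≤ x + ε) :
    cumVal v y ≤ cumVal v x + Δ * ε := by
  have hp : 0 ≤ Δ * ε := mul_nonneg (hδ.le.trans hΔ) hε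
  rcases le_total x y with h1 | h1
  · have := (cumVal_bounds h hx hy h1).2
    have : Δ * (y - x) ≤ Δ * ε := mul_le_mul_of_nonneg_left (by linarith) (hδ.le.trans hΔ)
    linarith
  · have := (cum_strict hδ h).monotoneOn hy hx h1
    linarith

theorem explore_good {δ Δ : ℝ} (hδ : 0 < δ) (hΔ : δ ≤ Δ) {vA vB : ℝ → ℝ}
    (hA : IsValueDensity δ Δ vA) (hB : IsValueDensity δ Δ vB) (T : ℕ)
    {c : Fin 2 → ℝ} {b : Bool} (hc : ValidCuts 2 c)
    (hb : 1 / 2 ≤ pieceVal vB (altPiece 2 c (!b))) :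
    ∃ t < 2 * (Nat.sqrt T + 1) + 1, pieceVal vA (altPiece 2 c b) - 2 * Δ / (Nat.sqrt T + 1 : ℕ) ≤
      pieceVal vA (altPiece 2 (roundCuts 2 (stairStrategy vA) (myopicBob 2 vA vB) T t)
        (!roundChoice 2 (stairStrategy vA) (myopicBob 2 vA vB) T t)) := by
  obtain ⟨w, hcut⟩ := stair_walk (vA := vA) hB T
  have hs := cum_strict hδ hB
  have hN : 0 < Nat.sqrt T + 1 := by omega
  generalize Nat.sqrt T + 1 = N at *
  have hε : (0:ℝ) ≤ 1 / (N:ℝ) := by positivity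
  have hdiv : 2 * Δ / (N:ℝ) = 2 * (Δ * (1 / (N:ℝ))) := by ring
  cases b
  · simp only [Bool.not_false] at hb
    rw [val_true hB hc] at hb
    obtain ⟨t, ht, h1, h2, h3⟩ := walk_A hN hs w (hc.2 0) (hc.2 1) (by linarith)
    refine ⟨t, ht, ?_⟩
    have hI := (walk_inv hN hs w t ht.le).1
    rw [h1, hcut t ht, Bool.not_true, val_false hA hc, val_false hA (explCut_valid _ _ _), hdiv]
    simp only [explCut, min_eq_left hI, Matrix.cons_val_zero, Matrix.cons_val_one]
    have l1 := cum_lip hδ hΔ hA hε (hc.2 0) (gp_mem _ _) h2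
    have l2 := cum_lip hδ hΔ hA hε (gp_mem _ _) (hc.2 1) (sub_le_iff_le_add.1 h3)
    linarith
  · simp only [Bool.not_true] at hb
    rw [val_false hB hc] at hb
    obtain ⟨t, ht, h1, h2, h3⟩ := walk_B hN hs (cumVal_zero _) (cumVal_one hB) w
      (hc.2 0) (hc.2 1) (by linarith)
    refine ⟨t, ht, ?_⟩
    have hI := (walk_inv hN hs w t ht.le).1
    rw [h1, hcut t ht, Bool.not_false, val_true hA hc, val_true hA (explCut_valid _ _ _), hdiv]
    simp only [explCut, min_eq_left hI, Matrix.cons_val_zero, Matrix.cons_val_one]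
    have l1 := cum_lip hδ hΔ hA hε (gp_mem _ _) (hc.2 0) (sub_le_iff_le_add.1 h2)
    have l2 := cum_lip hδ hΔ hA hε (hc.2 1) (gp_mem _ _) h3
    linarith

theorem exists_best (vA : ℝ → ℝ) (h : Hist 2) (hv : ∀ e ∈ h, ValidCuts 2 e.1) (hne : h ≠ []) :
    ∃ e, IsBest vA h e := by
  obtain ⟨e, he, hmax⟩ := h.toFinset.exists_max_image
    (fun e => pieceVal vA (altPiece 2 e.1 (!e.2))) (by simpa using hne)
  exact ⟨e, by simpa using he, hv e (by simpa using he), fun e' he' => hmax e' (by simpa using he')⟩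

theorem exploit_good {δ Δ : ℝ} (hδ : 0 < δ) (hΔ : δ ≤ Δ) {vA vB : ℝ → ℝ}
    (hA : IsValueDensity δ Δ vA) (hB : IsValueDensity δ Δ vB) (T t : ℕ)
    (ht : 2 * (Nat.sqrt T + 1) + 1 ≤ t) :
    stackelbergValue 2 vA vB - 2 * Δ / (Nat.sqrt T + 1 : ℕ) ≤
      pieceVal vA (altPiece 2 (roundCuts 2 (stairStrategy vA) (myopicBob 2 vA vB) T t)
        (!roundChoice 2 (stairStrategy vA) (myopicBob 2 vA vB) T t)) := by
  set H := playHist 2 (stairStrategy vA) (myopicBob 2 vA vB) T t with hH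
  have hlen : H.length = t := hist_length _ _ _ _
  have hex : ∃ e, IsBest vA H e := by
    apply exists_best
    · intro e he
      obtain ⟨s, -, rfl⟩ := (hist_mem _ _ _ _ _).1 he
      exact stair_valid vA _ _
    · intro h0; rw [h0] at hlen; simp at hlen; omega
  have hcut : roundCuts 2 (stairStrategy vA) (myopicBob 2 vA vB) T t = hex.choose.1 := by
    have key : stairStrategy vA T H = hex.choose.1 := by
      have hnl : ¬ H.length < 2 * (Nat.sqrt T + 1) + 1 := not_lt.2 (ht.trans hlen.ge)
      clear_value H
      unfold stairStrategy
      rw [if_neg hnl, dif_pos hex]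
    exact key
  obtain ⟨hm, hv, hmax⟩ := hex.choose_spec
  have hch : roundChoice 2 (stairStrategy vA) (myopicBob 2 vA vB) T t = hex.choose.2 := by
    obtain ⟨s, hs, he⟩ := (hist_mem _ _ _ _ _).1 hm
    rw [roundChoice, hcut, he]
    rfl
  rw [hcut, hch]
  have hpos : 0 ≤ 2 * Δ / ((Nat.sqrt T + 1 : ℕ) : ℝ) := by
    have := hδ.le.trans hΔ; positivity
  rw [sub_le_iff_le_add]
  apply Real.sSup_le
  · rintro u ⟨c, b, hc, hb, rfl⟩
    obtain ⟨s, hs, h1⟩ := explore_good hδ hΔ hA hB T hc hb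
    have := hmax _ ((hist_mem _ _ _ _ _).2 ⟨s, by omega, rfl⟩)
    simp only at this
    linarith
  · have := (val_nonneg hδ hA hv (!hex.choose.2)).1
    linarith

theorem stack_le_one {δ Δ : ℝ} (hδ : 0 < δ) {vA : ℝ → ℝ} (vB : ℝ → ℝ)
    (hA : IsValueDensity δ Δ vA) : stackelbergValue 2 vA vB ≤ 1 := by
  apply Real.sSup_le
  · rintro u ⟨c, b, hc, hb, rfl⟩
    exact (val_nonneg hδ hA hc b).2
  · norm_num

/-- 2 cuts, myopic Bob, upper bound: for all `0 < δ ≤ Δ` there is `C > 0`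
such that for every Alice value density there is a deterministic Alice strategy whose
Stackelberg regret against the myopic Bob is at most `C·√(T·log T)` for every Bob value
density and every horizon `T ≥ 2`. -/
theorem two_cut_myopic_upper (δ Δ : ℝ) (hδ : 0 < δ) (hδΔ : δ ≤ Δ) :
    ∃ C : ℝ, 0 < C ∧
      ∀ vA : ℝ → ℝ, IsValueDensity δ Δ vA →
        ∃ SA : AliceStrategy 2, AliceValid 2 SA ∧
          ∀ vB : ℝ → ℝ, IsValueDensity δ Δ vB →
            ∀ T : ℕ, 2 ≤ T →
              aliceRegret 2 vA vB SA (myopicBob 2 vA vB) T ≤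
                C * Real.sqrt (T * Real.log T) := by
  have hΔ : 0 < Δ := hδ.trans_le hδΔ
  refine ⟨2 * (5 + 2 * Δ), by positivity, fun vA hA => ⟨stairStrategy vA, stair_valid vA, ?_⟩⟩
  intro vB hB T hT
  have hT1 : (2:ℝ) ≤ T := by exact_mod_cast hT
  have hbd : ∀ t ∈ Finset.range T, stackelbergValue 2 vA vB -
      pieceVal vA (altPiece 2 (roundCuts 2 (stairStrategy vA) (myopicBob 2 vA vB) T t)
        (!(roundChoice 2 (stairStrategy vA) (myopicBob 2 vA vB) T t))) ≤
      (if t < 2 * (Nat.sqrt T + 1) + 1 then (1:ℝ) else 0) + 2 * Δ / (Nat.sqrt T + 1 : ℕ) := by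
    intro t _
    have hpos : 0 ≤ 2 * Δ / ((Nat.sqrt T + 1 : ℕ) : ℝ) := by positivity
    split_ifs with h
    · have := stack_le_one hδ vB hA
      have := (val_nonneg hδ hA (stair_valid vA T
        (playHist 2 (stairStrategy vA) (myopicBob 2 vA vB) T t))
        (!(roundChoice 2 (stairStrategy vA) (myopicBob 2 vA vB) T t))).1
      unfold roundCuts
      linarith
    · have := exploit_good hδ hδΔ hA hB T t (by omega)
      linarith
  have hsum := Finset.sum_le_sum hbd
  rw [Finset.sum_add_distrib, Finset.sum_const, Finset.card_range, nsmul_eq_mul] at hsum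
  have hS0 : 0 ≤ Real.sqrt T := Real.sqrt_nonneg _
  have hS2 : Real.sqrt T * Real.sqrt T = T := Real.mul_self_sqrt (by linarith)
  have hS1 : 1 ≤ Real.sqrt T := Real.one_le_sqrt.2 (by linarith)
  have hle : (Nat.sqrt T : ℝ) ≤ Real.sqrt T := Real.nat_sqrt_le_real_sqrt
  have hge : Real.sqrt T ≤ Nat.sqrt T + 1 := Real.real_sqrt_le_nat_sqrt_succ
  have h1 : ∑ t ∈ Finset.range T, (if t < 2 * (Nat.sqrt T + 1) + 1 then (1:ℝ) else 0) ≤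
      2 * (Real.sqrt T + 1) + 1 := by
    rw [← Finset.sum_filter, Finset.sum_const, nsmul_eq_mul, mul_one]
    have hcard : (Finset.filter (fun t => t < 2 * (Nat.sqrt T + 1) + 1) (Finset.range T)).card ≤
        2 * (Nat.sqrt T + 1) + 1 := by
      calc _ ≤ (Finset.range (2 * (Nat.sqrt T + 1) + 1)).card := by
            apply Finset.card_le_card
            intro t ht
            simp only [Finset.mem_filter, Finset.mem_range] at ht ⊢
            exact ht.2
        _ = _ := Finset.card_range _
    have : ((Finset.filter (fun t => t < 2 * (Nat.sqrt T + 1) + 1) (Finset.range T)).card : ℝ) ≤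
        2 * ((Nat.sqrt T : ℝ) + 1) + 1 := by exact_mod_cast hcard
    linarith
  have h2 : (T:ℝ) * (2 * Δ / (Nat.sqrt T + 1 : ℕ)) ≤ 2 * Δ * Real.sqrt T := by
    rw [← mul_div_assoc, div_le_iff₀ (by positivity)]
    push_cast
    calc (T:ℝ) * (2 * Δ) = 2 * Δ * Real.sqrt T * Real.sqrt T := by rw [mul_assoc, hS2]; ring
      _ ≤ _ := by gcongr
  have hlog : Real.sqrt T ≤ 2 * Real.sqrt (T * Real.log T) := by
    have hl2 : (1:ℝ)/4 ≤ Real.log T := by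
      have := Real.log_two_gt_d9
      have := Real.log_le_log (by norm_num) hT1
      linarith
    have : Real.sqrt T ≤ Real.sqrt (2 ^ 2 * (T * Real.log T)) := by
      apply Real.sqrt_le_sqrt
      nlinarith
    rwa [Real.sqrt_mul (by norm_num), Real.sqrt_sq (by norm_num)] at this
  unfold aliceRegret
  calc _ ≤ _ := hsum
    _ ≤ (5 + 2 * Δ) * Real.sqrt T := by nlinarith
    _ ≤ (5 + 2 * Δ) * (2 * Real.sqrt (T * Real.log T)) := by gcongr
    _ = _ := by ring

end
end
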